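/- arXiv:2508.05942 — 2 statements merged into one kernel-verified Lean document; each statement's English description precedes it below -/
import Mathlib

section
/- For any integer b ≥ 2 such that b + 1 is not a power of 2, there exist infinitely many positive integers t such that the b-Cullen number t·b^t + 1 is a b-Brier number. -/
/-- An integer `m` is composite if `m > 1` and `m` is not prime. -/
def IsComposite (m : ℤ) : Prop := 1 < m ∧ ¬ Prime m

/-- `k` is a `b`-Sierpiński number: a positive integer with `gcd (k+1) (b-1) = 1`
such that `k * b ^ n + 1` is composite for all positive integers `n`. -/
def IsBSierpinski (b k : ℤ) : Prop :=
  0 < k ∧ Int.gcd (k + 1) (b - 1) = 1 ∧ ∀ n : ℕ, 0 < n → IsComposite (k * b ^ n + 1)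

/-- `k` is a `b`-Riesel number: a positive integer with `gcd (k-1) (b-1) = 1`
such that `k * b ^ n - 1` is composite for all positive integers `n`. -/
def IsBRiesel (b k : ℤ) : Prop :=
  0 < k ∧ Int.gcd (k - 1) (b - 1) = 1 ∧ ∀ n : ℕ, 0 < n → IsComposite (k * b ^ n - 1)

/-- `k` is a `b`-Brier number: both `b`-Sierpiński and `b`-Riesel. -/
def IsBBrier (b k : ℤ) : Prop := IsBSierpinski b k ∧ IsBRiesel b k

/-- Reduction of the theorem to a statement about small divisors. -/
lemma brier_final (b : ℕ) (hb : 2 ≤ b) (B : ℕ)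
    (h : ∀ N : ℕ, ∃ t : ℕ, N ≤ t ∧ ((b : ℤ) - 1) ∣ (t : ℤ) + 1 ∧ ∀ n : ℕ,
      (∃ d : ℕ, 1 < d ∧ d ≤ B ∧ (d : ℤ) ∣ ((t : ℤ) * (b : ℤ) ^ t + 1) * (b : ℤ) ^ n + 1) ∧
      (∃ d : ℕ, 1 < d ∧ d ≤ B ∧ (d : ℤ) ∣ ((t : ℤ) * (b : ℤ) ^ t + 1) * (b : ℤ) ^ n - 1)) :
    {t : ℕ | 0 < t ∧ IsBBrier (b : ℤ) ((t : ℤ) * (b : ℤ) ^ t + 1)}.Infinite := by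
  have hcomp : ∀ (m : ℤ) (d : ℕ), 1 < d → d ≤ B → (d : ℤ) ∣ m → (B : ℤ) + 1 < m →
      IsComposite m := by
    intro m d h1 h2 h3 h4
    refine ⟨by omega, fun hp => ?_⟩
    obtain ⟨c, hc⟩ := h3
    rcases hp.irreducible.isUnit_or_isUnit hc with hu | hu
    · rw [Int.isUnit_iff] at hu
      omega
    · rw [Int.isUnit_iff] at hu
      rcases hu with hu | hu <;> subst hu <;> omega
  rw [Set.infinite_iff_exists_gt]
  intro N
  obtain ⟨t, ht, htb, hd⟩ := h (N + B + 3)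
  refine ⟨t, ?_, by omega⟩
  have hbt : (1 : ℤ) ≤ (b : ℤ) ^ t := one_le_pow₀ (by omega)
  have hk : (t : ℤ) ≤ (t : ℤ) * (b : ℤ) ^ t := le_mul_of_one_le_right (by omega) hbt
  have hbb : ((b : ℤ) - 1) ∣ (b : ℤ) ^ t - 1 := sub_one_dvd_pow_sub_one _ _
  obtain ⟨u, hu⟩ := htb
  obtain ⟨v, hv⟩ := hbb
  have key : (t : ℤ) * (b : ℤ) ^ t = (b - 1 : ℤ) * (u * (b : ℤ) ^ t - v) - 1 := by
    linear_combination (b : ℤ) ^ t * hu - hv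
  show 0 < t ∧ IsBBrier (b : ℤ) ((t : ℤ) * (b : ℤ) ^ t + 1)
  set K : ℤ := (t : ℤ) * (b : ℤ) ^ t + 1 with hK
  have hbn : ∀ n : ℕ, K ≤ K * (b : ℤ) ^ n := fun n =>
    le_mul_of_one_le_right (by omega) (one_le_pow₀ (by omega))
  refine ⟨by omega, ⟨by omega, ?_, ?_⟩, ⟨by omega, ?_, ?_⟩⟩
  · rw [← Int.isCoprime_iff_gcd_eq_one]
    exact ⟨1, -(u * (b : ℤ) ^ t - v), by rw [hK, key]; ring⟩
  · intro n _
    obtain ⟨d, h1, h2, h3⟩ := (hd n).1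
    exact hcomp _ d h1 h2 h3 (by have := hbn n; omega)
  · rw [← Int.isCoprime_iff_gcd_eq_one]
    exact ⟨-1, (u * (b : ℤ) ^ t - v), by rw [hK, key]; ring⟩
  · intro n _
    obtain ⟨d, h1, h2, h3⟩ := (hd n).2
    exact hcomp _ d h1 h2 h3 (by have := hbn n; omega)

/-! ### The base 2 -/

lemma two_cover_plus : ∀ r < 720, 1 < Nat.gcd (3316923598096294713661 * 2 ^ r + 1)
    341204433933492413845614820721955 := by
  decide +kernel

lemma two_cover_minus : ∀ r < 720, 1 < Nat.gcd (3316923598096294713661 * 2 ^ r - 1)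
    341204433933492413845614820721955 := by
  decide +kernel

lemma two_facts : 2 ^ 720 % 341204433933492413845614820721955 = 1 ∧
    8925753050233580520499549559322255 % 720 = 15 ∧
    (8925753050233580520499549559322255 * 2 ^ 15 + 1) % 341204433933492413845614820721955 =
      3316923598096294713661 % 341204433933492413845614820721955 ∧
    16377812828807635864589511394653840 % 720 = 0 ∧
    16377812828807635864589511394653840 % 341204433933492413845614820721955 = 0 := by
  decide +kernel

lemma brier_two : {t : ℕ | 0 < t ∧ IsBBrier ((2 : ℕ) : ℤ) ((t : ℤ) * ((2 : ℕ) : ℤ) ^ t + 1)}.Infinite := by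
  obtain ⟨f1, f2, f3, f4, f5⟩ := two_facts
  have cp := two_cover_plus
  have cm := two_cover_minus
  generalize hP : 341204433933492413845614820721955 = P at *
  generalize hK : 3316923598096294713661 = K at *
  generalize hT : 8925753050233580520499549559322255 = T at *
  generalize hM : 16377812828807635864589511394653840 = M at *
  have hPpos : 0 < P := by omega
  have hKpos : 0 < K := by omega
  have hMpos : 0 < M := by omega
  have h1 : 2 ^ 720 ≡ 1 [MOD P] := by
    have : 1 % P = 1 := Nat.mod_eq_of_lt (by omega)
    rw [Nat.ModEq, this]; exact f1
  clear hP hK hT hM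
  apply brier_final 2 le_rfl P
  intro N
  refine ⟨T + M * N, by nlinarith [Nat.le_mul_of_pos_left N hMpos], by norm_num, ?_⟩
  set t := T + M * N with ht
  have htT : t ≡ T [MOD P] := by
    have : M ≡ 0 [MOD P] := by rw [Nat.ModEq, f5, Nat.zero_mod]
    simpa [ht] using (Nat.ModEq.refl T).add (this.mul_right N)
  have ht7 : t % 720 = 15 := by
    have : M ≡ 0 [MOD 720] := by rw [Nat.ModEq, f4]
    have h2 : t ≡ T [MOD 720] := by simpa [ht] using (Nat.ModEq.refl T).add (this.mul_right N)
    rw [← f2]; exact h2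
  have hpow : ∀ n : ℕ, 2 ^ n ≡ 2 ^ (n % 720) [MOD P] := by
    intro n
    conv_lhs => rw [← Nat.div_add_mod n 720, pow_add, pow_mul]
    simpa using (h1.pow (n / 720)).mul_right (2 ^ (n % 720))
  have hk : t * 2 ^ t + 1 ≡ K [MOD P] := by
    have h3 := hpow t
    rw [ht7] at h3
    exact ((htT.mul h3).add_right 1).trans f3
  have hkn : ∀ n, ((((t * 2 ^ t + 1) * 2 ^ n : ℕ)) : ℤ) ≡ ((K * 2 ^ (n % 720) : ℕ) : ℤ) [ZMOD P] := by
    intro n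
    exact Int.natCast_modEq_iff.2 (hk.mul (hpow n))
  intro n
  have hn : n % 720 < 720 := Nat.mod_lt _ (by norm_num)
  have hle : 1 ≤ K * 2 ^ (n % 720) := Nat.mul_pos hKpos (by positivity)
  have hd := (hkn n).dvd
  refine ⟨⟨_, cp _ hn, Nat.le_of_dvd hPpos (Nat.gcd_dvd_right _ _), ?_⟩,
    ⟨_, cm _ hn, Nat.le_of_dvd hPpos (Nat.gcd_dvd_right _ _), ?_⟩⟩
  · have g1 := Int.natCast_dvd_natCast.2 (Nat.gcd_dvd_left (K * 2 ^ (n % 720) + 1) P)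
    have g2 := (Int.natCast_dvd_natCast.2 (Nat.gcd_dvd_right (K * 2 ^ (n % 720) + 1) P)).trans hd
    have := dvd_sub g1 g2
    have e : ((K * 2 ^ (n % 720) + 1 : ℕ) : ℤ) - (((K * 2 ^ (n % 720) : ℕ) : ℤ) -
        (((t * 2 ^ t + 1) * 2 ^ n : ℕ) : ℤ)) =
        ((t : ℤ) * ((2 : ℕ) : ℤ) ^ t + 1) * ((2 : ℕ) : ℤ) ^ n + 1 := by
      push_cast
      ring
    rwa [e] at this
  · have g1 := Int.natCast_dvd_natCast.2 (Nat.gcd_dvd_left (K * 2 ^ (n % 720) - 1) P)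
    have g2 := (Int.natCast_dvd_natCast.2 (Nat.gcd_dvd_right (K * 2 ^ (n % 720) - 1) P)).trans hd
    have := dvd_sub g1 g2
    have e : ((K * 2 ^ (n % 720) - 1 : ℕ) : ℤ) - (((K * 2 ^ (n % 720) : ℕ) : ℤ) -
        (((t * 2 ^ t + 1) * 2 ^ n : ℕ) : ℤ)) =
        ((t : ℤ) * ((2 : ℕ) : ℤ) ^ t + 1) * ((2 : ℕ) : ℤ) ^ n - 1 := by
      rw [Nat.cast_sub hle]
      push_cast
      ring
    rwa [e] at this

/-! ### Primitive prime divisors -/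

lemma exists_big_prime (N : ℕ) (h4 : ¬ 4 ∣ N) (h9 : ¬ 9 ∣ N) (h1 : N ≠ 1) (h2 : N ≠ 2)
    (h3 : N ≠ 3) (h6 : N ≠ 6) : ∃ p : ℕ, p.Prime ∧ 5 ≤ p ∧ p ∣ N := by
  have hM : ∃ M : ℕ, M ∣ N ∧ ¬ 2 ∣ M ∧ ¬ 3 ∣ M ∧ M ≠ 1 := by
    by_cases a : 2 ∣ N <;> by_cases c : 3 ∣ N
    · exact ⟨N / 6, Nat.div_dvd_of_dvd (by omega), by omega, by omega, by omega⟩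
    · exact ⟨N / 2, Nat.div_dvd_of_dvd (by omega), by omega, by omega, by omega⟩
    · exact ⟨N / 3, Nat.div_dvd_of_dvd (by omega), by omega, by omega, by omega⟩
    · exact ⟨N, dvd_rfl, a, c, h1⟩
  obtain ⟨M, hMN, m2, m3, m1⟩ := hM
  have hp := Nat.minFac_prime m1
  have hd := Nat.minFac_dvd M
  refine ⟨_, hp, ?_, hd.trans hMN⟩
  by_contra hlt
  push Not at hlt
  have := hp.two_le
  generalize M.minFac = q at *
  interval_cases q
  · exact m2 hd
  · exact m3 hd
  · exact absurd hp (by norm_num)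

lemma order_smooth {G : Type*} [Monoid G] (x : G) (m : ℕ) (hm : m ∣ 216) (h1 : x ^ m = 1)
    (h2 : 2 ∣ m → x ^ (m / 2) ≠ 1) (h3 : 3 ∣ m → x ^ (m / 3) ≠ 1) : orderOf x = m := by
  refine orderOf_eq_of_pow_and_pow_div_prime (Nat.pos_of_dvd_of_pos hm (by norm_num)) h1 ?_
  intro q hq hqm
  have h : q ∣ 6 ^ 3 := hqm.trans hm
  have h' : q ∣ 2 * 3 := hq.dvd_of_dvd_pow h
  rcases (hq.dvd_mul).1 h' with h | h
  · rw [Nat.prime_dvd_prime_iff_eq hq Nat.prime_two] at h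
    subst h; exact h2 hqm
  · rw [Nat.prime_dvd_prime_iff_eq hq Nat.prime_three] at h
    subst h; exact h3 hqm

lemma small_ne_zero (p : ℕ) (h5 : 5 ≤ p) : (2 : ZMod p) ≠ 0 ∧ (3 : ZMod p) ≠ 0 := by
  constructor
  · intro h
    have : ((2 : ℕ) : ZMod p) = 0 := by exact_mod_cast h
    rw [ZMod.natCast_eq_zero_iff] at this
    have := Nat.le_of_dvd (by norm_num) this
    omega
  · intro h
    have : ((3 : ℕ) : ZMod p) = 0 := by exact_mod_cast h
    rw [ZMod.natCast_eq_zero_iff] at this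
    have := Nat.le_of_dvd (by norm_num) this
    omega

lemma prim_three (b : ℕ) (hb : 3 ≤ b) (e : ℕ) (he : 0 < e) (hm : 3 * e ∣ 216) (h2 : ¬ 2 ∣ e) :
    ∃ p : ℕ, p.Prime ∧ 5 ≤ p ∧ orderOf (b : ZMod p) = 3 * e := by
  have hy : 3 ≤ b ^ e := hb.trans (Nat.le_self_pow he.ne' b)
  obtain ⟨p, hp, h5, hd⟩ := exists_big_prime (b ^ e * b ^ e + b ^ e + 1)
    (by
      generalize b ^ e = y
      intro h
      have h' : (y * y + y + 1) % 4 = 0 := Nat.mod_eq_zero_of_dvd h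
      have : y % 4 < 4 := Nat.mod_lt _ (by norm_num)
      rw [Nat.add_mod, Nat.add_mod (y * y), Nat.mul_mod] at h'
      interval_cases y % 4 <;> simp at h')
    (by
      generalize b ^ e = y
      intro h
      have h' : (y * y + y + 1) % 9 = 0 := Nat.mod_eq_zero_of_dvd h
      have : y % 9 < 9 := Nat.mod_lt _ (by norm_num)
      rw [Nat.add_mod, Nat.add_mod (y * y), Nat.mul_mod] at h'
      interval_cases y % 9 <;> simp at h')
    (by nlinarith) (by nlinarith) (by nlinarith) (by nlinarith)
  have := Fact.mk hp
  obtain ⟨n2, n3⟩ := small_ne_zero p h5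
  refine ⟨p, hp, h5, order_smooth _ _ hm ?_ ?_ ?_⟩
  all_goals
    have hz : (b : ZMod p) ^ e * (b : ZMod p) ^ e + (b : ZMod p) ^ e + 1 = 0 := by
      rw [← ZMod.natCast_eq_zero_iff] at hd
      exact_mod_cast hd
  · rw [mul_comm, pow_mul]
    generalize (b : ZMod p) ^ e = y at hz
    linear_combination (y - 1) * hz
  · intro h; omega
  · intro _ h
    rw [Nat.mul_div_cancel_left _ (by norm_num)] at h
    rw [h] at hz
    exact n3 (by linear_combination hz)

lemma prim_four (b : ℕ) (hb : 3 ≤ b) (e : ℕ) (he : 0 < e) (hm : 4 * e ∣ 216) (h2 : ¬ 3 ∣ e) :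
    ∃ p : ℕ, p.Prime ∧ 5 ≤ p ∧ orderOf (b : ZMod p) = 4 * e := by
  have hy : 3 ≤ b ^ e := hb.trans (Nat.le_self_pow he.ne' b)
  obtain ⟨p, hp, h5, hd⟩ := exists_big_prime (b ^ e * b ^ e + 1)
    (by
      generalize b ^ e = y
      intro h
      have h' : (y * y + 1) % 4 = 0 := Nat.mod_eq_zero_of_dvd h
      have : y % 4 < 4 := Nat.mod_lt _ (by norm_num)
      rw [Nat.add_mod, Nat.mul_mod] at h'
      interval_cases y % 4 <;> simp at h')
    (by
      generalize b ^ e = y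
      intro h
      have h' : (y * y + 1) % 9 = 0 := Nat.mod_eq_zero_of_dvd h
      have : y % 9 < 9 := Nat.mod_lt _ (by norm_num)
      rw [Nat.add_mod, Nat.mul_mod] at h'
      interval_cases y % 9 <;> simp at h')
    (by nlinarith) (by nlinarith) (by nlinarith) (by nlinarith)
  have := Fact.mk hp
  obtain ⟨n2, n3⟩ := small_ne_zero p h5
  refine ⟨p, hp, h5, order_smooth _ _ hm ?_ ?_ ?_⟩
  all_goals
    have hz : (b : ZMod p) ^ e * (b : ZMod p) ^ e + 1 = 0 := by
      rw [← ZMod.natCast_eq_zero_iff] at hd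
      exact_mod_cast hd
  · rw [mul_comm, pow_mul]
    generalize (b : ZMod p) ^ e = y at hz
    linear_combination (y * y - 1) * hz
  · intro _ h
    rw [show 4 * e / 2 = e + e by omega, pow_add] at h
    exact n2 (by linear_combination hz - h)
  · intro h; omega

lemma prim_six (b : ℕ) (hb : 3 ≤ b) (e : ℕ) (he : 0 < e) (hm : 6 * e ∣ 216) :
    ∃ p : ℕ, p.Prime ∧ 5 ≤ p ∧ orderOf (b : ZMod p) = 6 * e := by
  have hy : 3 ≤ b ^ e := hb.trans (Nat.le_self_pow he.ne' b)
  obtain ⟨z, hzz⟩ : ∃ z, b ^ e = z + 1 := ⟨b ^ e - 1, by omega⟩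
  obtain ⟨p, hp, h5, hd⟩ := exists_big_prime (z * z + z + 1)
    (by
      intro h
      have h' : (z * z + z + 1) % 4 = 0 := Nat.mod_eq_zero_of_dvd h
      have : z % 4 < 4 := Nat.mod_lt _ (by norm_num)
      rw [Nat.add_mod, Nat.add_mod (z * z), Nat.mul_mod] at h'
      interval_cases z % 4 <;> simp at h')
    (by
      intro h
      have h' : (z * z + z + 1) % 9 = 0 := Nat.mod_eq_zero_of_dvd h
      have : z % 9 < 9 := Nat.mod_lt _ (by norm_num)
      rw [Nat.add_mod, Nat.add_mod (z * z), Nat.mul_mod] at h'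
      interval_cases z % 9 <;> simp at h')
    (by nlinarith) (by nlinarith) (by nlinarith) (by nlinarith)
  have := Fact.mk hp
  obtain ⟨n2, n3⟩ := small_ne_zero p h5
  refine ⟨p, hp, h5, order_smooth _ _ hm ?_ ?_ ?_⟩
  all_goals
    have hz : (b : ZMod p) ^ e * (b : ZMod p) ^ e - (b : ZMod p) ^ e + 1 = 0 := by
      rw [← ZMod.natCast_eq_zero_iff] at hd
      have h1 : (b : ZMod p) ^ e = z + 1 := by exact_mod_cast congrArg (Nat.cast : ℕ → ZMod p) hzz
      push_cast at hd
      rw [h1]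
      linear_combination hd
  · rw [mul_comm, pow_mul]
    generalize (b : ZMod p) ^ e = y at hz
    linear_combination (y ^ 3 - 1) * (y + 1) * hz
  · intro _ h
    rw [show 6 * e / 2 = e * 3 by omega, pow_mul] at h
    generalize (b : ZMod p) ^ e = y at hz h
    exact n2 (by linear_combination (y + 1) * hz - h)
  · intro _ h
    rw [show 6 * e / 3 = e * 2 by omega, pow_mul] at h
    generalize (b : ZMod p) ^ e = y at hz h
    have hy2 : y = 2 := by linear_combination h - hz
    subst hy2
    exact n3 (by linear_combination hz)

/-- The orders used in the two coverings. -/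
def brierOrders : Finset ℕ := {2, 3, 4, 6, 8, 9, 12, 18, 24, 27, 36, 54, 108}

lemma prim_all (b : ℕ) (hb : 3 ≤ b) (q : ℕ) (hq : q.Prime) (hq2 : q ≠ 2) (hqb : q ∣ b + 1)
    (m : ℕ) (hm : m ∈ brierOrders) :
    ∃ p : ℕ, p.Prime ∧ p ≠ 2 ∧ (p = 3 → m = 2) ∧ orderOf (b : ZMod p) = m := by
  have key : m ≠ 2 → (∃ p : ℕ, p.Prime ∧ 5 ≤ p ∧ orderOf (b : ZMod p) = m) →
      ∃ p : ℕ, p.Prime ∧ p ≠ 2 ∧ (p = 3 → m = 2) ∧ orderOf (b : ZMod p) = m := by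
    rintro _ ⟨p, h1, h2, h3⟩
    exact ⟨p, h1, by omega, by omega, h3⟩
  simp only [brierOrders, Finset.mem_insert, Finset.mem_singleton] at hm
  rcases hm with rfl | hm
  · have := Fact.mk hq
    refine ⟨q, hq, hq2, fun _ => rfl, ?_⟩
    have hz : (b : ZMod q) = -1 := by
      rw [← ZMod.natCast_eq_zero_iff] at hqb
      push_cast at hqb
      linear_combination hqb
    rw [hz, orderOf_neg_one, ringChar.eq (ZMod q) q, if_neg hq2]
  · apply key (by omega)
    rcases hm with rfl | rfl | rfl | rfl | rfl | rfl | rfl | rfl | rfl | rfl | rfl | rfl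
    · exact prim_three b hb 1 (by norm_num) (by norm_num) (by norm_num)
    · exact prim_four b hb 1 (by norm_num) (by norm_num) (by norm_num)
    · exact prim_six b hb 1 (by norm_num) (by norm_num)
    · exact prim_four b hb 2 (by norm_num) (by norm_num) (by norm_num)
    · exact prim_three b hb 3 (by norm_num) (by norm_num) (by norm_num)
    · exact prim_six b hb 2 (by norm_num) (by norm_num)
    · exact prim_six b hb 3 (by norm_num) (by norm_num)
    · exact prim_six b hb 4 (by norm_num) (by norm_num)
    · exact prim_three b hb 9 (by norm_num) (by norm_num) (by norm_num)
    · exact prim_six b hb 6 (by norm_num) (by norm_num)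
    · exact prim_six b hb 9 (by norm_num) (by norm_num)
    · exact prim_six b hb 18 (by norm_num) (by norm_num)

/-- Exponents of the covering. -/
def brierExp (m : ℕ) : ℕ :=
  if m = 2 then 0 else if m = 3 then 1 else if m = 4 then 0 else if m = 6 then 3 else
  if m = 8 then 2 else if m = 9 then 5 else if m = 12 then 10 else if m = 18 then 11 else
  if m = 24 then 14 else if m = 27 then 17 else if m = 36 then 17 else if m = 54 then 35 else 107

/-- Signs of the covering. -/
def brierSign (m : ℕ) : ℤ :=
  if m = 4 ∨ m = 8 ∨ m = 12 ∨ m = 24 then 1 else -1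

lemma zmod_three_aux : ∀ y : ZMod 3, y ≠ 0 → y ≠ 1 → y = -1 := by decide

lemma zmod_three_aux' : (-1 : ZMod 3) = 1 + 1 := by decide

/-- For each order there is a prime and a residue class for `t` which makes it work. -/
lemma prim_res (b : ℕ) (hb : 3 ≤ b) (q : ℕ) (hq : q.Prime) (hq2 : q ≠ 2) (hqb : q ∣ b + 1)
    (m : ℕ) (hm : m ∈ brierOrders) :
    ∃ p c : ℕ, p.Prime ∧ p ≠ 2 ∧ (p = 3 → m = 2) ∧ orderOf (b : ZMod p) = m ∧
      ∀ t : ℕ, 216 ∣ t + 1 → (p = 3 ∨ t ≡ c [MOD p]) →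
        ((t : ZMod p) * (b : ZMod p) ^ t + 1) * (b : ZMod p) ^ brierExp m
          = (brierSign m : ZMod p) := by
  obtain ⟨p, hp, h2, h3, ho⟩ := prim_all b hb q hq hq2 hqb m hm
  have := Fact.mk hp
  have hm216 : m ∣ 216 := by
    simp only [brierOrders, Finset.mem_insert, Finset.mem_singleton] at hm
    rcases hm with rfl | rfl | rfl | rfl | rfl | rfl | rfl | rfl | rfl | rfl | rfl | rfl | rfl <;>
      norm_num
  have hm0 : m ≠ 0 := by rintro rfl; simp at hm216
  have hb0 : (b : ZMod p) ≠ 0 := by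
    intro h
    have h1 := pow_orderOf_eq_one (b : ZMod p)
    rw [ho, h, zero_pow hm0] at h1
    exact zero_ne_one h1
  set w : ZMod p := b * (brierSign m * ((b : ZMod p) ^ brierExp m)⁻¹ - 1) with hw
  refine ⟨p, w.val, hp, h2, h3, ho, ?_⟩
  intro t ht htc
  have hbt : (b : ZMod p) ^ (t + 1) = 1 := by
    rw [← orderOf_dvd_iff_pow_eq_one, ho]; exact hm216.trans ht
  have htw : (t : ZMod p) = w := by
    rcases htc with h | h
    · have hm2 := h3 h
      subst h
      subst hm2
      have t1 : (t : ZMod 3) = -1 := by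
        have : 3 ∣ t + 1 := by omega
        rw [← ZMod.natCast_eq_zero_iff] at this
        push_cast at this
        linear_combination this
      have b1 : (b : ZMod 3) = -1 := by
        have e1 : (b : ZMod 3) ≠ 1 := by
          intro h; rw [h, orderOf_one] at ho; omega
        exact zmod_three_aux _ hb0 e1
      rw [hw, t1, b1]
      simp [brierSign, brierExp]
      exact zmod_three_aux'
    · rw [(ZMod.natCast_eq_natCast_iff t w.val p).2 h, ZMod.natCast_zmod_val]
  have hk : (t : ZMod p) * (b : ZMod p) ^ t + 1 =
      brierSign m * ((b : ZMod p) ^ brierExp m)⁻¹ := by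
    apply mul_left_cancel₀ hb0
    have : (b : ZMod p) * ((t : ZMod p) * (b : ZMod p) ^ t + 1) = t * (b : ZMod p) ^ (t + 1) + b := by
      ring
    rw [this, hbt, htw, hw]
    ring
  rw [hk, mul_assoc, inv_mul_cancel₀ (pow_ne_zero _ hb0), mul_one]

lemma brier_three_le (b : ℕ) (hb : 3 ≤ b) (q : ℕ) (hq : q.Prime) (hq2 : q ≠ 2)
    (hqb : q ∣ b + 1) :
    {t : ℕ | 0 < t ∧ IsBBrier (b : ℤ) ((t : ℤ) * (b : ℤ) ^ t + 1)}.Infinite := by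
  have H : ∀ m : ℕ, ∃ p c : ℕ, m ∈ brierOrders → (p.Prime ∧ p ≠ 2 ∧ (p = 3 → m = 2) ∧
      orderOf (b : ZMod p) = m ∧
      ∀ t : ℕ, 216 ∣ t + 1 → (p = 3 ∨ t ≡ c [MOD p]) →
        ((t : ZMod p) * (b : ZMod p) ^ t + 1) * (b : ZMod p) ^ brierExp m
          = (brierSign m : ZMod p)) := by
    intro m
    by_cases hm : m ∈ brierOrders
    · obtain ⟨p, c, h⟩ := prim_res b hb q hq hq2 hqb m hm
      exact ⟨p, c, fun _ => h⟩
    · exact ⟨0, 0, fun h => absurd h hm⟩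
  choose p c hpc using H
  have hone : 1 ∉ brierOrders := by decide
  set s : ℕ → ℕ := fun i => if i = 1 then 216 * (b - 1) else if p i = 3 then 1 else p i with hs
  set a : ℕ → ℕ := fun i => if i = 1 then 216 * (b - 1) - 1 else c i with ha
  have hs1 : s 1 = 216 * (b - 1) := by simp [hs]
  have hsm : ∀ m ∈ brierOrders, s m = if p m = 3 then 1 else p m := by
    intro m hm
    have : m ≠ 1 := fun h => hone (h ▸ hm)
    simp [hs, this]
  have hs0 : ∀ i ∈ insert 1 brierOrders, s i ≠ 0 := by
    intro i hi
    rcases Finset.mem_insert.1 hi with rfl | hi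
    · rw [hs1]; omega
    · rw [hsm i hi]
      have := (hpc i hi).1.pos
      split_ifs <;> omega
  have hcop1 : ∀ m ∈ brierOrders, Nat.Coprime (s m) (s 1) := by
    intro m hm
    rw [hsm m hm, hs1]
    obtain ⟨hp, h2, h3, ho, -⟩ := hpc m hm
    split_ifs with h
    · exact Nat.coprime_one_left _
    · rw [hp.coprime_iff_not_dvd, hp.dvd_mul]
      rintro (hd | hd)
      · have h' : p m ∣ 6 ^ 3 := hd
        have h' : p m ∣ 2 * 3 := hp.dvd_of_dvd_pow h'
        rcases (hp.dvd_mul).1 h' with h' | h'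
        · exact h2 ((Nat.prime_dvd_prime_iff_eq hp Nat.prime_two).1 h')
        · exact h ((Nat.prime_dvd_prime_iff_eq hp Nat.prime_three).1 h')
      · rw [← ZMod.natCast_eq_zero_iff, Nat.cast_sub (by omega), Nat.cast_one, sub_eq_zero] at hd
        rw [hd, orderOf_one] at ho
        exact hone (ho ▸ hm)
  have hpp : Set.Pairwise (insert 1 brierOrders : Finset ℕ) (Function.onFun Nat.Coprime s) := by
    intro i hi j hj hij
    rw [Finset.mem_coe] at hi hj
    show Nat.Coprime (s i) (s j)
    rcases Finset.mem_insert.1 hi with rfl | hi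
    · rcases Finset.mem_insert.1 hj with rfl | hj
      · exact absurd rfl hij
      · exact (hcop1 j hj).symm
    · rcases Finset.mem_insert.1 hj with rfl | hj
      · exact hcop1 i hi
      · rw [hsm i hi, hsm j hj]
        split_ifs
        · exact Nat.coprime_one_left _
        · exact Nat.coprime_one_left _
        · exact Nat.coprime_one_right _
        · rw [Nat.coprime_primes (hpc i hi).1 (hpc j hj).1]
          intro h
          have h1 := (hpc i hi).2.2.2.1
          rw [h] at h1
          exact hij (h1.symm.trans (hpc j hj).2.2.2.1)
  obtain ⟨t0, ht0⟩ := Nat.chineseRemainderOfFinset a s (insert 1 brierOrders) hs0 hpp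
  set M := ∏ i ∈ insert 1 brierOrders, s i with hM
  have hM0 : 0 < M := Finset.prod_pos fun i hi => Nat.pos_of_ne_zero (hs0 i hi)
  apply brier_final b (by omega) (∑ m ∈ brierOrders, p m)
  intro N
  have hdiv : ∀ i ∈ insert 1 brierOrders, t0 + M * N ≡ a i [MOD s i] := by
    intro i hi
    refine Nat.ModEq.trans ?_ (ht0 i hi)
    have : M ≡ 0 [MOD s i] := (Nat.modEq_zero_iff_dvd).2 (Finset.dvd_prod_of_mem s hi)
    simpa using (Nat.ModEq.refl t0).add (this.mul_right N)
  have htN : N ≤ t0 + M * N := le_add_left (Nat.le_mul_of_pos_left N hM0)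
  generalize t0 + M * N = t at hdiv htN
  have ht1 : 216 * (b - 1) ∣ t + 1 := by
    have h := hdiv 1 (Finset.mem_insert_self _ _)
    rw [hs1, show a 1 = 216 * (b - 1) - 1 by simp [ha]] at h
    have h' := h.add_right 1
    rw [show 216 * (b - 1) - 1 + 1 = 216 * (b - 1) by omega] at h'
    exact (Nat.modEq_zero_iff_dvd).1 (h'.trans ((Nat.modEq_zero_iff_dvd).2 dvd_rfl))
  have hkey : ∀ m ∈ brierOrders,
      ((t : ZMod (p m)) * (b : ZMod (p m)) ^ t + 1) * (b : ZMod (p m)) ^ brierExp m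
          = (brierSign m : ZMod (p m)) := by
    intro m hm
    refine (hpc m hm).2.2.2.2 t ((Dvd.intro _ rfl).trans ht1) ?_
    by_cases h : p m = 3
    · exact Or.inl h
    · right
      have h1 := hdiv m (Finset.mem_insert_of_mem hm)
      have h2 : m ≠ 1 := fun h => hone (h ▸ hm)
      rw [hsm m hm, if_neg h, show a m = c m by simp [ha, h2]] at h1
      exact h1
  have hcov : ∀ m ∈ brierOrders, ∀ n, n % m = brierExp m % m →
      (p m : ℤ) ∣ ((t : ℤ) * (b : ℤ) ^ t + 1) * (b : ℤ) ^ n - brierSign m := by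
    intro m hm n hn
    have h1 : (b : ZMod (p m)) ^ n = (b : ZMod (p m)) ^ brierExp m := by
      rw [← pow_mod_orderOf, (hpc m hm).2.2.2.1, hn]
      conv_rhs => rw [← pow_mod_orderOf, (hpc m hm).2.2.2.1]
    rw [← ZMod.intCast_zmod_eq_zero_iff_dvd]
    push_cast
    rw [h1, hkey m hm, sub_self]
  have hcov' : ∀ m ∈ brierOrders, 2 ∣ m → ∀ n, (n + m / 2) % m = brierExp m % m →
      (p m : ℤ) ∣ ((t : ℤ) * (b : ℤ) ^ t + 1) * (b : ℤ) ^ n + brierSign m := by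
    intro m hm h2 n hn
    have h3 := hcov m hm _ hn
    have := Fact.mk (hpc m hm).1
    have ho := (hpc m hm).2.2.2.1
    have hm0 : 0 < m := Nat.pos_of_ne_zero (by rintro rfl; revert hm; decide)
    have h4 : (b : ZMod (p m)) ^ (m / 2) = -1 := by
      have h5 : ((b : ZMod (p m)) ^ (m / 2)) ^ 2 = 1 := by
        rw [← pow_mul, Nat.div_mul_cancel h2]
        exact orderOf_dvd_iff_pow_eq_one.1 (dvd_of_eq ho)
      rcases mul_self_eq_one_iff.1 ((sq _).symm.trans h5) with h | h
      · exfalso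
        have := Nat.le_of_dvd (by omega) (orderOf_dvd_of_pow_eq_one h)
        omega
      · exact h
    rw [← ZMod.intCast_zmod_eq_zero_iff_dvd] at h3 ⊢
    push_cast at h3 ⊢
    rw [pow_add, h4] at h3
    linear_combination -h3
  refine ⟨t, htN, ?_, ?_⟩
  · have h : b - 1 ∣ t + 1 := (Dvd.intro_left _ rfl).trans ht1
    have h' := Int.natCast_dvd_natCast.2 h
    rw [Nat.cast_sub (by omega)] at h'
    exact_mod_cast h'
  have hbound : ∀ m ∈ brierOrders, 1 < p m ∧ p m ≤ ∑ m ∈ brierOrders, p m := fun m hm =>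
    ⟨(hpc m hm).1.one_lt, Finset.single_le_sum (fun _ _ => Nat.zero_le _) hm⟩
  intro n
  constructor
  · have hc : ∃ m ∈ brierOrders, brierSign m = -1 ∧ n % m = brierExp m % m := by
      have : n % 2 = 0 ∨ n % 6 = 3 ∨ n % 3 = 1 ∨ n % 18 = 11 ∨ n % 9 = 5 ∨ n % 36 = 17 ∨
        n % 54 = 35 ∨ n % 27 = 17 ∨ n % 108 = 107 := by omega
      rcases this with h | h | h | h | h | h | h | h | h
      · exact ⟨2, by decide, by decide, h⟩
      · exact ⟨6, by decide, by decide, h⟩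
      · exact ⟨3, by decide, by decide, h⟩
      · exact ⟨18, by decide, by decide, h⟩
      · exact ⟨9, by decide, by decide, h⟩
      · exact ⟨36, by decide, by decide, h⟩
      · exact ⟨54, by decide, by decide, h⟩
      · exact ⟨27, by decide, by decide, h⟩
      · exact ⟨108, by decide, by decide, h⟩
    obtain ⟨m, hm, hsg, hn⟩ := hc
    refine ⟨p m, (hbound m hm).1, (hbound m hm).2, ?_⟩
    have := hcov m hm n hn
    rwa [hsg, sub_neg_eq_add] at this
  · have hc : (∃ m ∈ brierOrders, brierSign m = 1 ∧ n % m = brierExp m % m) ∨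
        (∃ m ∈ brierOrders, 2 ∣ m ∧ brierSign m = -1 ∧ (n + m / 2) % m = brierExp m % m) := by
      have : n % 2 = 1 ∨ n % 6 = 0 ∨ n % 4 = 0 ∨ n % 12 = 10 ∨ n % 8 = 2 ∨ n % 24 = 14 := by omega
      rcases this with h | h | h | h | h | h
      · exact Or.inr ⟨2, by decide, by decide, by decide, by simp [brierExp]; omega⟩
      · exact Or.inr ⟨6, by decide, by decide, by decide, by simp [brierExp]; omega⟩
      · exact Or.inl ⟨4, by decide, by decide, h⟩
      · exact Or.inl ⟨12, by decide, by decide, h⟩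
      · exact Or.inl ⟨8, by decide, by decide, h⟩
      · exact Or.inl ⟨24, by decide, by decide, h⟩
    rcases hc with ⟨m, hm, hsg, hn⟩ | ⟨m, hm, h2, hsg, hn⟩
    · refine ⟨p m, (hbound m hm).1, (hbound m hm).2, ?_⟩
      have := hcov m hm n hn
      rwa [hsg] at this
    · refine ⟨p m, (hbound m hm).1, (hbound m hm).2, ?_⟩
      have := hcov' m hm h2 n hn
      rwa [hsg, ← sub_eq_add_neg] at this

theorem infinitely_many_cullen_b_brier (b : ℤ) (hb : 2 ≤ b)
    (hb2 : ¬ ∃ n : ℕ, b + 1 = 2 ^ n) :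
    {t : ℕ | 0 < t ∧ IsBBrier b ((t : ℤ) * b ^ t + 1)}.Infinite := by
  lift b to ℕ using (by omega)
  rcases (show b = 2 ∨ 3 ≤ b by omega) with rfl | h3
  · exact brier_two
  · have hq : ∃ q : ℕ, q.Prime ∧ q ≠ 2 ∧ q ∣ b + 1 := by
      by_contra hno
      push Not at hno
      apply hb2
      refine ⟨(b + 1).primeFactorsList.length, ?_⟩
      have := Nat.eq_prime_pow_of_unique_prime_dvd (n := b + 1) (p := 2) (by omega)
        (fun {d} hd hdv => by
          by_contra h
          exact hno d hd h hdv)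
      exact_mod_cast this
    obtain ⟨q, h1, h2, h3'⟩ := hq
    exact brier_three_le b h3 q h1 h2 h3'
end

section
/- For any integer b ≥ 2 such that b + 1 is not a power of 2, there exist infinitely many positive integers t such that the b-Woodall number t·b^t − 1 is a b-Brier number. -/
/-- Shared final step: divisibility by bounded primes gives the Brier property. -/
lemma composite_of_dvd (p : ℕ) (hp : p.Prime) (x : ℤ) (hx : (p : ℤ) < x) (h : (p : ℤ) ∣ x) :
    IsComposite x := by
  have h2 : (2 : ℤ) ≤ p := by exact_mod_cast hp.two_le
  refine ⟨by linarith, fun hpr => ?_⟩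
  have h3 := (Int.prime_iff_natAbs_prime).1 hpr
  have h4 : p ∣ x.natAbs := Int.natCast_dvd.1 h
  have h5 := (Nat.prime_dvd_prime_iff_eq hp h3).1 h4
  omega

lemma brier_of (b : ℤ) (hb : 2 ≤ b) (t B : ℕ) (ht : B + 2 ≤ t) (hmod : (b - 1) ∣ (t : ℤ) - 1)
    (hS : ∀ n : ℕ, ∃ p : ℕ, p.Prime ∧ p ≤ B ∧ (p : ℤ) ∣ ((t : ℤ) * b ^ t - 1) * b ^ n + 1)
    (hR : ∀ n : ℕ, ∃ p : ℕ, p.Prime ∧ p ≤ B ∧ (p : ℤ) ∣ ((t : ℤ) * b ^ t - 1) * b ^ n - 1) :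
    IsBBrier b ((t : ℤ) * b ^ t - 1) := by
  have hbt : (1 : ℤ) ≤ b ^ t := one_le_pow₀ (by linarith)
  have hk : (B : ℤ) + 1 ≤ (t : ℤ) * b ^ t - 1 := by
    have : (B : ℤ) + 2 ≤ t := by exact_mod_cast ht
    nlinarith
  have hd : (b - 1) ∣ (t : ℤ) * b ^ t - 1 := by
    have h1 : (b - 1) ∣ b ^ t - 1 := by simpa using sub_dvd_pow_sub_pow b 1 t
    have : (t : ℤ) * b ^ t - 1 = ((t : ℤ) - 1) * b ^ t + (b ^ t - 1) := by ring
    rw [this]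
    exact dvd_add (hmod.mul_right _) h1
  generalize (t : ℤ) * b ^ t - 1 = k at *
  have hB : (0 : ℤ) ≤ B := by positivity
  have hbn : ∀ n : ℕ, 0 < n → 2 * k ≤ k * b ^ n := by
    intro n hn
    have : b ^ 1 ≤ b ^ n := pow_le_pow_right₀ (by linarith) hn
    nlinarith
  obtain ⟨c, hc⟩ := hd
  refine ⟨⟨by linarith, ?_, ?_⟩, ⟨by linarith, ?_, ?_⟩⟩
  · rw [← Int.isCoprime_iff_gcd_eq_one]
    exact ⟨1, -c, by rw [hc]; ring⟩
  · intro n hn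
    obtain ⟨p, hp, hpB, hdv⟩ := hS n
    have := hbn n hn
    have : (p : ℤ) ≤ B := by exact_mod_cast hpB
    exact composite_of_dvd p hp _ (by linarith) hdv
  · rw [← Int.isCoprime_iff_gcd_eq_one]
    exact ⟨-1, c, by rw [hc]; ring⟩
  · intro n hn
    obtain ⟨p, hp, hpB, hdv⟩ := hR n
    have := hbn n hn
    have : (p : ℤ) ≤ B := by exact_mod_cast hpB
    exact composite_of_dvd p hp _ (by linarith) hdv

-- The case `b = 2`

/-- Primes of the covering used for base two. -/
def basePrimes : List ℕ :=
  [3, 5, 7, 11, 13, 17, 19, 31, 37, 41, 73, 97, 109, 151, 241, 331, 673, 1321]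

set_option exponentiation.threshold 1000 in
lemma basePrimes_spec : ∀ p ∈ basePrimes, p.Prime ∧ p ≤ 1321 ∧ 2 ^ 720 % p = 1 ∧
    90485153750318430191102272898640 % p = 0 ∧
    (86714939012380290732187825551361 * 2) % p = (3316923598096294713661 + 1) % p := by
  intro p hp
  simp only [basePrimes, List.mem_cons, List.not_mem_nil, or_false] at hp
  rcases hp with h | h | h | h | h | h | h | h | h | h | h | h | h | h | h | h | h | h <;>
    subst h <;> norm_num

lemma basePrimes_cover_S : ∀ r < 720, ∃ p ∈ basePrimes,
    (3316923598096294713661 * 2 ^ r + 1) % p = 0 := by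
  decide +kernel

lemma basePrimes_cover_R : ∀ r < 720, ∃ p ∈ basePrimes,
    (3316923598096294713661 * 2 ^ r) % p = 1 := by
  decide +kernel

lemma two_pow_mod (p : ℕ) (h : (2 : ZMod p) ^ 720 = 1) (n : ℕ) :
    (2 : ZMod p) ^ n = 2 ^ (n % 720) := by
  conv_lhs => rw [← Nat.div_add_mod n 720]
  rw [pow_add, pow_mul, h, one_pow, one_mul]

lemma base_two_k (p : ℕ) (hp : p ∈ basePrimes) (j : ℕ) :
    ((86714939012380290732187825551361 + 90485153750318430191102272898640 * j : ℕ) : ZMod p) *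
      2 ^ (86714939012380290732187825551361 + 90485153750318430191102272898640 * j) - 1
      = 3316923598096294713661 := by
  obtain ⟨hpp, -, h720, hM, hT⟩ := basePrimes_spec p hp
  have h : (2 : ZMod p) ^ 720 = 1 := by
    have : ((2 ^ 720 : ℕ) : ZMod p) = (1 : ℕ) := by
      rw [ZMod.natCast_eq_natCast_iff', h720, Nat.mod_eq_of_lt hpp.one_lt]
    simpa only [Nat.cast_pow, Nat.cast_ofNat, Nat.cast_one] using this
  have hM' : ((90485153750318430191102272898640 : ℕ) : ZMod p) = 0 :=
    (ZMod.natCast_eq_zero_iff _ _).2 (Nat.dvd_of_mod_eq_zero hM)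
  have hT' : ((86714939012380290732187825551361 * 2 : ℕ) : ZMod p)
      = ((3316923598096294713661 + 1 : ℕ) : ZMod p) := (ZMod.natCast_eq_natCast_iff' _ _ _).2 hT
  rw [two_pow_mod p h]
  have : (86714939012380290732187825551361 + 90485153750318430191102272898640 * j) % 720 = 1 := by
    omega
  rw [this]
  rw [Nat.cast_add, Nat.cast_mul, hM', zero_mul, add_zero, pow_one]
  have e : ((86714939012380290732187825551361 : ℕ) : ZMod p) * 2
      = ((86714939012380290732187825551361 * 2 : ℕ) : ZMod p) := by
    rw [Nat.cast_mul, Nat.cast_ofNat (n := 2)]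
  rw [e, hT', Nat.cast_add, Nat.cast_one, Nat.cast_ofNat, add_sub_cancel_right]

lemma base_two_infinite :
    {t : ℕ | 0 < t ∧ IsBBrier 2 ((t : ℤ) * 2 ^ t - 1)}.Infinite := by
  refine Set.infinite_of_injective_forall_mem
    (f := fun j : ℕ => 86714939012380290732187825551361 + 90485153750318430191102272898640 * j)
    ?_ ?_
  · intro i j h
    simp only at h
    omega
  · intro j
    have hpos : 1321 + 2 ≤
      86714939012380290732187825551361 + 90485153750318430191102272898640 * j := by omega
    have key := fun p hp => base_two_k p hp j
    generalize 86714939012380290732187825551361 + 90485153750318430191102272898640 * j = t at *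
    refine ⟨by omega, brier_of 2 le_rfl t 1321 hpos (by norm_num) ?_ ?_⟩
    · intro n
      obtain ⟨p, hp, h⟩ := basePrimes_cover_S (n % 720) (Nat.mod_lt _ (by norm_num))
      obtain ⟨hpp, hle, h720, -⟩ := basePrimes_spec p hp
      refine ⟨p, hpp, hle, ?_⟩
      have h2 : (2 : ZMod p) ^ 720 = 1 := by
        have : ((2 ^ 720 : ℕ) : ZMod p) = (1 : ℕ) := by
          rw [ZMod.natCast_eq_natCast_iff', h720, Nat.mod_eq_of_lt hpp.one_lt]
        simpa only [Nat.cast_pow, Nat.cast_ofNat, Nat.cast_one] using this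
      rw [← ZMod.intCast_zmod_eq_zero_iff_dvd]
      have h3 := (ZMod.natCast_eq_zero_iff _ _).2 (Nat.dvd_of_mod_eq_zero h)
      push_cast at h3 ⊢
      rw [key p hp, two_pow_mod p h2 n]
      exact h3
    · intro n
      obtain ⟨p, hp, h⟩ := basePrimes_cover_R (n % 720) (Nat.mod_lt _ (by norm_num))
      obtain ⟨hpp, hle, h720, -⟩ := basePrimes_spec p hp
      refine ⟨p, hpp, hle, ?_⟩
      have h2 : (2 : ZMod p) ^ 720 = 1 := by
        have : ((2 ^ 720 : ℕ) : ZMod p) = (1 : ℕ) := by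
          rw [ZMod.natCast_eq_natCast_iff', h720, Nat.mod_eq_of_lt hpp.one_lt]
        simpa only [Nat.cast_pow, Nat.cast_ofNat, Nat.cast_one] using this
      rw [← ZMod.intCast_zmod_eq_zero_iff_dvd]
      have h3 : ((3316923598096294713661 * 2 ^ (n % 720) : ℕ) : ZMod p) = (1 : ℕ) := by
        rw [ZMod.natCast_eq_natCast_iff', h, Nat.mod_eq_of_lt hpp.one_lt]
      push_cast at h3 ⊢
      rw [key p hp, two_pow_mod p h2 n, h3, sub_self]

-- Primitive prime divisors

lemma prim_two (c : ℕ) (hc : ¬ ∃ n : ℕ, c + 1 = 2 ^ n) :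
    ∃ p : ℕ, p.Prime ∧ orderOf (c : ZMod p) = 2 := by
  rcases Nat.eq_two_pow_or_exists_odd_prime_and_dvd (c + 1) with ⟨n, h⟩ | ⟨p, hp, hd, ho⟩
  · exact absurd ⟨n, h⟩ hc
  · refine ⟨p, hp, ?_⟩
    have : Fact p.Prime := ⟨hp⟩
    have : Fact (2 < p) := ⟨by
      rcases ho with ⟨r, hr⟩
      have := hp.two_le
      omega⟩
    have h := (ZMod.natCast_eq_zero_iff _ _).2 hd
    push_cast at h
    have h1 : (c : ZMod p) = -1 := eq_neg_of_add_eq_zero_left h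
    rw [h1]
    refine orderOf_eq_prime (by norm_num) ?_
    exact ZMod.neg_one_ne_one

lemma prim_two_pow (c i : ℕ) (hc : 2 ≤ c) :
    ∃ p : ℕ, p.Prime ∧ orderOf (c : ZMod p) = 2 ^ (i + 2) := by
  rcases Nat.eq_two_pow_or_exists_odd_prime_and_dvd (c ^ 2 ^ (i + 1) + 1) with ⟨n, h⟩ | ⟨p, hp, hd, ho⟩
  · exfalso
    have h1 : c ^ 2 ^ (i + 1) = (c ^ 2 ^ i) * (c ^ 2 ^ i) := by
      rw [← pow_add]; congr 1; ring
    have h2 : 2 ≤ c ^ 2 ^ i := hc.trans (Nat.le_self_pow (by positivity) c)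
    rw [h1] at h
    generalize c ^ 2 ^ i = y at *
    rcases n with _ | _ | n
    · nlinarith
    · norm_num at h; nlinarith
    · have h3 : (y * y + 1) % 4 = 0 := by rw [h, pow_add, pow_add]; omega
      have h4 : y % 4 = 0 ∨ y % 4 = 1 ∨ y % 4 = 2 ∨ y % 4 = 3 := by omega
      rcases h4 with h4 | h4 | h4 | h4 <;> simp [Nat.add_mod, Nat.mul_mod, h4] at h3
  · refine ⟨p, hp, ?_⟩
    have : Fact p.Prime := ⟨hp⟩
    have : Fact (2 < p) := ⟨by
      rcases ho with ⟨r, hr⟩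
      have := hp.two_le
      omega⟩
    have h := (ZMod.natCast_eq_zero_iff _ _).2 hd
    push_cast at h
    have h1 : (c : ZMod p) ^ 2 ^ (i + 1) = -1 := eq_neg_of_add_eq_zero_left h
    refine orderOf_eq_prime_pow (p := 2) (n := i + 1) ?_ ?_
    · rw [h1]; exact ZMod.neg_one_ne_one
    · rw [pow_succ 2 (i + 1), pow_mul, h1]; norm_num

lemma exists_prime_ne_three (N : ℕ) (h3 : 3 < N) (h9 : N % 9 ≠ 0) :
    ∃ p : ℕ, p.Prime ∧ p ∣ N ∧ p ≠ 3 := by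
  by_contra! hcon
  have := Nat.eq_prime_pow_of_unique_prime_dvd (n := N) (p := 3) (by omega)
    (fun {d} hd hdN => hcon d hd hdN)
  generalize N.primeFactorsList.length = l at this
  rcases l with _ | _ | l
  · omega
  · omega
  · apply h9
    rw [this, pow_add, pow_add]; omega

lemma prim_three_pow (c i : ℕ) (hc : 2 ≤ c) :
    ∃ p : ℕ, p.Prime ∧ orderOf (c : ZMod p) = 3 ^ (i + 1) := by
  have h2 : 2 ≤ c ^ 3 ^ i := hc.trans (Nat.le_self_pow (by positivity) c)
  obtain ⟨p, hp, hd, h3⟩ := exists_prime_ne_three (c ^ 3 ^ i * c ^ 3 ^ i + c ^ 3 ^ i + 1)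
    (by nlinarith) (by
      generalize c ^ 3 ^ i = y
      intro h
      have : y % 9 < 9 := Nat.mod_lt _ (by norm_num)
      rw [Nat.add_mod, Nat.add_mod (y * y), Nat.mul_mod] at h
      generalize y % 9 = z at *
      interval_cases z <;> omega)
  refine ⟨p, hp, ?_⟩
  have : Fact p.Prime := ⟨hp⟩
  have h := (ZMod.natCast_eq_zero_iff _ _).2 hd
  push_cast at h
  have hne : (3 : ZMod p) ≠ 0 := by
    intro h0
    have : ((3 : ℕ) : ZMod p) = 0 := by exact_mod_cast h0
    rw [ZMod.natCast_eq_zero_iff] at this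
    exact h3 ((Nat.prime_dvd_prime_iff_eq hp Nat.prime_three).1 this)
  refine orderOf_eq_prime_pow (p := 3) (n := i) ?_ ?_
  · intro h1
    rw [h1] at h
    apply hne
    linear_combination h
  · rw [pow_succ 3 i, pow_mul]
    linear_combination ((c : ZMod p) ^ 3 ^ i - 1) * h

lemma prim_six_s14 (c d : ℕ) (hc : 3 ≤ c) (hd0 : 0 < d)
    (hd : ∀ q : ℕ, q.Prime → q ∣ 6 * d → q = 2 ∨ q = 3) :
    ∃ p : ℕ, p.Prime ∧ orderOf (c : ZMod p) = 6 * d := by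
  have h2 : 3 ≤ c ^ d := hc.trans (Nat.le_self_pow hd0.ne' c)
  obtain ⟨y, hy⟩ : ∃ y, c ^ d = y + 1 := ⟨c ^ d - 1, by omega⟩
  obtain ⟨p, hp, hdv, h3⟩ := exists_prime_ne_three (y * y + y + 1)
    (by nlinarith) (by
      intro h
      have : y % 9 < 9 := Nat.mod_lt _ (by norm_num)
      rw [Nat.add_mod, Nat.add_mod (y * y), Nat.mul_mod] at h
      generalize y % 9 = z at *
      interval_cases z <;> omega)
  refine ⟨p, hp, ?_⟩
  have : Fact p.Prime := ⟨hp⟩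
  have h := (ZMod.natCast_eq_zero_iff _ _).2 hdv
  push_cast at h
  have hne : (3 : ZMod p) ≠ 0 := by
    intro h0
    have : ((3 : ℕ) : ZMod p) = 0 := by exact_mod_cast h0
    rw [ZMod.natCast_eq_zero_iff] at this
    exact h3 ((Nat.prime_dvd_prime_iff_eq hp Nat.prime_three).1 this)
  have hne2 : (2 : ZMod p) ≠ 0 := by
    intro h0
    have : ((2 : ℕ) : ZMod p) = 0 := by exact_mod_cast h0
    rw [ZMod.natCast_eq_zero_iff] at this
    have := ((Nat.prime_dvd_prime_iff_eq hp Nat.prime_two).1 this)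
    subst this
    have h5 : (y * y + y + 1) % 2 = 1 := by
      rcases Nat.even_or_odd' y with ⟨r, rfl | rfl⟩
      · ring_nf; omega
      · ring_nf; omega
    omega
  have hx : (c : ZMod p) ^ d = y + 1 := by exact_mod_cast congrArg (Nat.cast (R := ZMod p)) hy
  have hx3 : ((c : ZMod p) ^ d) ^ 3 = -1 := by
    rw [hx]; linear_combination ((y : ZMod p) + 2) * h
  refine orderOf_eq_of_pow_and_pow_div_prime (by omega) ?_ ?_
  · have : 6 * d = d * 3 * 2 := by ring
    rw [this, pow_mul, pow_mul, hx3]; norm_num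
  · intro q hq hqd
    rcases hd q hq hqd with rfl | rfl
    · have : 6 * d / 2 = d * 3 := by omega
      rw [this, pow_mul, hx3]
      intro h1
      apply hne2
      linear_combination -h1
    · have : 6 * d / 3 = d * 2 := by omega
      rw [this, pow_mul, hx]
      intro h1
      have hy1 : (y : ZMod p) = 1 := by linear_combination h1 - h
      rw [hy1] at h
      apply hne
      linear_combination h

/-- The moduli of the covering for general bases. -/
def covMods : Finset ℕ := {2, 3, 4, 6, 8, 9, 12, 16, 18, 24, 36, 72, 144}

/-- The residues of the covering for general bases. -/
def covRes (m : ℕ) : ℕ :=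
  if m = 2 then 1 else if m = 3 then 1 else if m = 4 then 3 else if m = 6 then 0 else
  if m = 8 then 7 else if m = 9 then 8 else if m = 12 then 1 else if m = 16 then 12 else
  if m = 18 then 2 else if m = 24 then 11 else if m = 36 then 14 else if m = 72 then 32 else 68

lemma cov_S : ∀ r < 144, ∃ m ∈ covMods, r % m = covRes m := by decide +kernel

lemma cov_R : ∀ r < 144, ∃ m ∈ covMods, m % 2 = 0 ∧ r % m = (covRes m + m / 2) % m := by
  decide +kernel

lemma cov_dvd : ∀ m ∈ covMods, m ∣ 144 ∧ 2 ≤ m ∧ covRes m < m := by decide +kernel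

lemma prim_cov (c : ℕ) (hc3 : 3 ≤ c) (hc : ¬ ∃ n : ℕ, c + 1 = 2 ^ n) (m : ℕ) (hm : m ∈ covMods) :
    ∃ p : ℕ, p.Prime ∧ orderOf (c : ZMod p) = m := by
  have h6 : ∀ d, 0 < d → d ∣ 24 → ∃ p : ℕ, p.Prime ∧ orderOf (c : ZMod p) = 6 * d := by
    intro d hd hd24
    refine prim_six_s14 c d hc3 hd ?_
    intro q hq hqd
    have h1 : q ∣ 2 ^ 4 * 3 ^ 2 := hqd.trans (by
      obtain ⟨e, he⟩ := hd24
      exact ⟨e, by rw [mul_assoc, ← he]; norm_num⟩)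
    rcases (hq.dvd_mul).1 h1 with h | h
    · exact Or.inl ((Nat.prime_dvd_prime_iff_eq hq Nat.prime_two).1 (hq.dvd_of_dvd_pow h))
    · exact Or.inr ((Nat.prime_dvd_prime_iff_eq hq Nat.prime_three).1 (hq.dvd_of_dvd_pow h))
  simp only [covMods, Finset.mem_insert, Finset.mem_singleton] at hm
  have hc2 : 2 ≤ c := by omega
  rcases hm with h | h | h | h | h | h | h | h | h | h | h | h | h <;> subst h
  · exact prim_two c hc
  · exact prim_three_pow c 0 hc2
  · exact prim_two_pow c 0 hc2
  · exact h6 1 (by norm_num) (by norm_num)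
  · exact prim_two_pow c 1 hc2
  · exact prim_three_pow c 1 hc2
  · exact h6 2 (by norm_num) (by norm_num)
  · exact prim_two_pow c 2 hc2
  · exact h6 3 (by norm_num) (by norm_num)
  · exact h6 4 (by norm_num) (by norm_num)
  · exact h6 6 (by norm_num) (by norm_num)
  · exact h6 12 (by norm_num) (by norm_num)
  · exact h6 24 (by norm_num) (by norm_num)

-- General bases

lemma order_facts (c p m : ℕ) (hp : p.Prime) (hm : 2 ≤ m) (ho : orderOf (c : ZMod p) = m) :
    (c : ZMod p) ≠ 0 ∧ m < p ∧ p.Coprime (c - 1) := by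
  have : Fact p.Prime := ⟨hp⟩
  have h0 : (c : ZMod p) ≠ 0 := by
    intro h0
    rw [h0, orderOf_zero] at ho
    omega
  refine ⟨h0, ?_, ?_⟩
  · have h1 := ZMod.orderOf_dvd_card_sub_one h0
    rw [ho] at h1
    have := Nat.le_of_dvd (by have := hp.two_le; omega) h1
    have := hp.two_le
    omega
  · rw [Nat.Prime.coprime_iff_not_dvd hp]
    intro hd
    have hc1 : 1 ≤ c := by
      rcases Nat.eq_zero_or_pos c with h | h
      · subst h; simp at h0
      · exact h
    have h1 := (ZMod.natCast_eq_zero_iff _ _).2 hd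
    rw [Nat.cast_sub hc1, Nat.cast_one, sub_eq_zero] at h1
    rw [h1, orderOf_one] at ho
    omega

lemma exists_base (c : ℕ) (hc : 3 ≤ c) (p : ℕ) (hp : p.Prime) (ho : orderOf (c : ZMod p) = 2) :
    ∃ t : ℕ, t ≡ 1 [MOD 144 * (c - 1)] ∧ (t : ZMod p) * c - 1 = -(c : ZMod p)⁻¹ ^ 1 := by
  have : Fact p.Prime := ⟨hp⟩
  obtain ⟨h0, hlt, hcop⟩ := order_facts c p 2 hp le_rfl ho
  have hsq : (c : ZMod p) ^ 2 = 1 := by rw [← ho]; exact pow_orderOf_eq_one _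
  have hc1 : (c : ZMod p) ≠ 1 := by
    intro h; rw [h, orderOf_one] at ho; omega
  have hcm : (c : ZMod p) = -1 := by
    rcases sq_eq_one_iff.1 hsq with h | h
    · exact absurd h hc1
    · exact h
  by_cases h3 : p = 3
  · subst h3
    refine ⟨1, rfl, ?_⟩
    rw [hcm, pow_one, inv_neg, inv_one]
    have : (3 : ZMod 3) = 0 := by exact_mod_cast ZMod.natCast_self 3
    push_cast
    linear_combination -this
  · have hco : (144 * (c - 1)).Coprime p := by
      refine Nat.Coprime.mul_left ?_ hcop.symm
      rw [Nat.coprime_comm, Nat.Prime.coprime_iff_not_dvd hp]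
      intro h
      have h1 : p ∣ 2 ^ 4 * 3 ^ 2 := h
      rcases (hp.dvd_mul).1 h1 with h | h
      · have := (Nat.prime_dvd_prime_iff_eq hp Nat.prime_two).1 (hp.dvd_of_dvd_pow h)
        omega
      · exact h3 ((Nat.prime_dvd_prime_iff_eq hp Nat.prime_three).1 (hp.dvd_of_dvd_pow h))
    obtain ⟨t, ht1, ht2⟩ := Nat.chineseRemainder hco 1 ((-2 : ZMod p).val)
    refine ⟨t, ht1, ?_⟩
    have := (ZMod.natCast_eq_natCast_iff _ _ _).2 ht2
    rw [this, ZMod.natCast_zmod_val, hcm]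
    rw [pow_one, inv_neg, inv_one]; ring

lemma general_infinite (c : ℕ) (hc3 : 3 ≤ c) (hc : ¬ ∃ n : ℕ, c + 1 = 2 ^ n) :
    {t : ℕ | 0 < t ∧ IsBBrier (c : ℤ) ((t : ℤ) * (c : ℤ) ^ t - 1)}.Infinite := by
  classical
  have hex : ∀ m : ℕ, ∃ p : ℕ, m ∈ covMods → p.Prime ∧ orderOf (c : ZMod p) = m := by
    intro m
    by_cases hm : m ∈ covMods
    · obtain ⟨p, hp⟩ := prim_cov c hc3 hc m hm
      exact ⟨p, fun _ => hp⟩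
    · exact ⟨0, fun h => absurd h hm⟩
  choose P hP using hex
  have hne : ∀ i ∈ covMods, ∀ j ∈ covMods, i ≠ j → (P i).Coprime (P j) := by
    intro i hi j hj hij
    rw [Nat.coprime_primes (hP i hi).1 (hP j hj).1]
    intro h
    apply hij
    rw [← (hP i hi).2, ← (hP j hj).2, h]
  have h2mem : 2 ∈ covMods := by decide
  obtain ⟨t1, ht1, ht1'⟩ := exists_base c hc3 (P 2) (hP 2 h2mem).1 (hP 2 h2mem).2
  -- the system of congruences
  let s : ℕ → ℕ := fun m => if m = 2 then 144 * (c - 1) * P 2 else P m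
  let a : ℕ → ℕ := fun m => if m = 2 then t1 else
    (((1 : ZMod (P m)) - (c : ZMod (P m))⁻¹ ^ covRes m) * (c : ZMod (P m))⁻¹).val
  have hs : ∀ i ∈ covMods, s i ≠ 0 := by
    intro i hi
    have := (hP i hi).1.pos
    by_cases h : i = 2
    · subst h
      have : 0 < c - 1 := by omega
      simp only [s, if_true]; positivity
    · simp only [s, if_neg h]; omega
  have hbase : ∀ j ∈ covMods, j ≠ 2 → (144 * (c - 1) * P 2).Coprime (P j) := by
    intro j hj hj2
    obtain ⟨hpj, hoj⟩ := hP j hj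
    have h2j := (cov_dvd j hj).2.1
    obtain ⟨-, hlt, hcop⟩ := order_facts c (P j) j hpj h2j hoj
    refine Nat.Coprime.mul_left (Nat.Coprime.mul_left ?_ hcop.symm) (hne 2 h2mem j hj hj2.symm)
    rw [Nat.coprime_comm, Nat.Prime.coprime_iff_not_dvd hpj]
    intro h
    have h1 : P j ∣ 2 ^ 4 * 3 ^ 2 := h
    rcases (hpj.dvd_mul).1 h1 with h | h
    · have := (Nat.prime_dvd_prime_iff_eq hpj Nat.prime_two).1 (hpj.dvd_of_dvd_pow h)
      omega
    · have := (Nat.prime_dvd_prime_iff_eq hpj Nat.prime_three).1 (hpj.dvd_of_dvd_pow h)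
      omega
  have hpw : Set.Pairwise (covMods : Set ℕ) (Function.onFun Nat.Coprime s) := by
    intro i hi j hj hij
    have hi' : i ∈ covMods := hi
    have hj' : j ∈ covMods := hj
    simp only [Function.onFun, s]
    by_cases h1 : i = 2
    · have h2 : j ≠ 2 := fun h => hij (h1.trans h.symm)
      rw [if_pos h1, if_neg h2]
      exact hbase j hj' h2
    · rw [if_neg h1]
      by_cases h2 : j = 2
      · rw [if_pos h2]
        exact (hbase i hi' h1).symm
      · rw [if_neg h2]
        exact hne i hi' j hj' hij
  obtain ⟨T, hT⟩ := Nat.chineseRemainderOfFinset a s covMods hs hpw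
  set M := ∏ m ∈ covMods, s m with hMdef
  have hMpos : 0 < M := Finset.prod_pos fun i hi => Nat.pos_of_ne_zero (hs i hi)
  have hsM : ∀ m ∈ covMods, s m ∣ M := fun m hm => Finset.dvd_prod_of_mem s hm
  set B := ∑ m ∈ covMods, P m with hBdef
  have hPB : ∀ m ∈ covMods, P m ≤ B := fun m hm =>
    Finset.single_le_sum (f := P) (fun _ _ => Nat.zero_le _) hm
  refine Set.infinite_of_injective_forall_mem (f := fun j : ℕ => T + M * (j + (B + 2))) ?_ ?_
  · intro i j h
    simp only at h
    have h1 := Nat.eq_of_mul_eq_mul_left hMpos (Nat.add_left_cancel h)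
    omega
  intro j
  have htB : B + 2 ≤ T + M * (j + (B + 2)) := by nlinarith
  have htcong : ∀ m ∈ covMods, T + M * (j + (B + 2)) ≡ a m [MOD s m] := by
    intro m hm
    have h1 : M * (j + (B + 2)) ≡ 0 [MOD s m] :=
      (Nat.modEq_zero_iff_dvd).2 ((hsM m hm).mul_right _)
    simpa using (hT m hm).add h1
  show 0 < T + M * (j + (B + 2)) ∧
    IsBBrier (c : ℤ) (((T + M * (j + (B + 2)) : ℕ) : ℤ) * (c : ℤ) ^ (T + M * (j + (B + 2))) - 1)
  generalize T + M * (j + (B + 2)) = t at *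
  have hc2 := htcong 2 h2mem
  simp only [s, a, if_true] at hc2
  have ht1mod : t ≡ 1 [MOD 144 * (c - 1)] := (hc2.of_mul_right (P 2)).trans ht1
  have ht144 : t % 144 = 1 := ht1mod.of_mul_right (c - 1)
  have htc : t ≡ 1 [MOD (c - 1)] := ht1mod.of_mul_left 144
  have hpow : ∀ m ∈ covMods, ∀ n : ℕ, (c : ZMod (P m)) ^ n = (c : ZMod (P m)) ^ (n % m) := by
    intro m hm n
    have h := pow_mod_orderOf (c : ZMod (P m)) n
    rw [(hP m hm).2] at h
    exact h.symm
  have hkey : ∀ m ∈ covMods, (t : ZMod (P m)) * (c : ZMod (P m)) ^ t - 1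
      = -(c : ZMod (P m))⁻¹ ^ covRes m := by
    intro m hm
    obtain ⟨hp, ho⟩ := hP m hm
    obtain ⟨hm144, hm2, -⟩ := cov_dvd m hm
    have : Fact (P m).Prime := ⟨hp⟩
    obtain ⟨h0, -, -⟩ := order_facts c (P m) m hp hm2 ho
    have e1 : (c : ZMod (P m)) ^ t = c := by
      rw [hpow m hm t]
      have : t % m = 1 := by
        rw [← Nat.mod_mod_of_dvd t hm144, ht144]
        exact Nat.mod_eq_of_lt (by omega)
      rw [this, pow_one]
    rw [e1]
    by_cases h2 : m = 2
    · subst h2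
      have h3 : (t : ZMod (P 2)) = t1 :=
        (ZMod.natCast_eq_natCast_iff _ _ _).2 (hc2.of_mul_left _)
      rw [h3]; exact ht1'
    · have h3 := htcong m hm
      simp only [s, a, if_neg h2] at h3
      have h4 := (ZMod.natCast_eq_natCast_iff _ _ _).2 h3
      rw [h4, ZMod.natCast_zmod_val, mul_assoc, inv_mul_cancel₀ h0]
      ring
  refine ⟨by omega, brier_of c (by exact_mod_cast (by omega : 2 ≤ c)) t B htB ?_ ?_ ?_⟩
  · have h1 := (Nat.modEq_iff_dvd.1 htc.symm)
    rw [Nat.cast_sub (by omega)] at h1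
    exact_mod_cast h1
  · intro n
    obtain ⟨m, hm, hr⟩ := cov_S (n % 144) (Nat.mod_lt _ (by norm_num))
    obtain ⟨hp, ho⟩ := hP m hm
    obtain ⟨hm144, hm2, -⟩ := cov_dvd m hm
    have : Fact (P m).Prime := ⟨hp⟩
    obtain ⟨h0, -, -⟩ := order_facts c (P m) m hp hm2 ho
    refine ⟨P m, hp, hPB m hm, ?_⟩
    rw [← ZMod.intCast_zmod_eq_zero_iff_dvd]
    push_cast
    rw [Nat.mod_mod_of_dvd n hm144] at hr
    rw [hkey m hm, hpow m hm n, hr, neg_mul, ← mul_pow, inv_mul_cancel₀ h0, one_pow]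
    ring
  · intro n
    obtain ⟨m, hm, hev, hr⟩ := cov_R (n % 144) (Nat.mod_lt _ (by norm_num))
    obtain ⟨hp, ho⟩ := hP m hm
    obtain ⟨hm144, hm2, -⟩ := cov_dvd m hm
    have : Fact (P m).Prime := ⟨hp⟩
    obtain ⟨h0, -, -⟩ := order_facts c (P m) m hp hm2 ho
    have hhalf : (c : ZMod (P m)) ^ (m / 2) = -1 := by
      have h1 : ((c : ZMod (P m)) ^ (m / 2)) ^ 2 = 1 := by
        rw [← pow_mul, Nat.div_mul_cancel (Nat.dvd_of_mod_eq_zero hev)]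
        exact orderOf_dvd_iff_pow_eq_one.1 ho.dvd
      rcases sq_eq_one_iff.1 h1 with h | h
      · exfalso
        have h2 := orderOf_dvd_of_pow_eq_one h
        rw [ho] at h2
        have := Nat.le_of_dvd (by omega) h2
        omega
      · exact h
    refine ⟨P m, hp, hPB m hm, ?_⟩
    rw [← ZMod.intCast_zmod_eq_zero_iff_dvd]
    push_cast
    rw [Nat.mod_mod_of_dvd n hm144] at hr
    rw [hkey m hm, hpow m hm n, hr, ← hpow m hm, pow_add, hhalf, neg_mul, ← mul_assoc, ← mul_pow,
      inv_mul_cancel₀ h0, one_pow]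
    ring

theorem infinitely_many_woodall_b_brier (b : ℤ) (hb : 2 ≤ b)
    (hb2 : ¬ ∃ n : ℕ, b + 1 = 2 ^ n) :
    {t : ℕ | 0 < t ∧ IsBBrier b ((t : ℤ) * b ^ t - 1)}.Infinite := by
  rcases hb.eq_or_lt with h | h
  · subst h
    exact base_two_infinite
  · obtain ⟨c, rfl⟩ := Int.eq_ofNat_of_zero_le (by linarith : (0 : ℤ) ≤ b)
    refine general_infinite c (by omega) ?_
    rintro ⟨n, hn⟩
    exact hb2 ⟨n, by exact_mod_cast hn⟩
end
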